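/- For every n ≥ 3, the cycle graph C_n has treewidth exactly 2, but the simplicial width of C_n (minimum width of a simplicial tree decomposition of C_n) is n − 1. In particular, cycles have unbounded simplicial width while having bounded treewidth. -/

import Mathlib

/-!
Subtrees of a tree satisfy the Helly property (`helly_finite`): pairwise intersecting subtrees
have a common node. For three subtrees the common node is a gate (`exists_gate`). Both lower
bounds find a large bag this way, working with the subtrees `T_v` of nodes whose bags contain `v`.

* Treewidth at least 2: the three sets `T_0`, `T_1` and `T_2 ∪ ⋯ ∪ T_{n-1}` are subtrees, because
  consecutive `T_v` meet, and they intersect pairwise. A common node has a bag of size at least 3.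
* Simplicial width at least `n - 1`: it suffices that any two `T_u`, `T_v` intersect, since a node
  common to all the `T_v` then has the whole vertex set as its bag. If `T_u` and `T_v` were
  disjoint, the tree edge `ij` by which some path from `T_u` to `T_v` leaves `T_u` would give an
  adhesion set `bags i ∩ bags j` separating `u` from `v` in the cycle. Such a set meets the interior
  of both arcs between `u` and `v`, hence contains two distinct nonadjacent vertices and is not a
  clique.

The upper bounds are the fan decomposition with bags `{0, i + 1, i + 2}` along a path, and the
decomposition with a single bag.
-/

def IsTreeDecomp {V ι : Type*} (G : SimpleGraph V) (T : SimpleGraph ι)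
    (bags : ι → Set V) : Prop :=
  T.IsTree ∧ (∀ v, ∃ i, v ∈ bags i) ∧
  (∀ u v, G.Adj u v → ∃ i, u ∈ bags i ∧ v ∈ bags i) ∧
  (∀ v, (T.induce {i | v ∈ bags i}).Connected)

def IsSimplicialDecomp {V ι : Type*} (G : SimpleGraph V) (T : SimpleGraph ι)
    (bags : ι → Set V) : Prop :=
  IsTreeDecomp G T bags ∧ ∀ i j, T.Adj i j → G.IsClique (bags i ∩ bags j)

/-! ### Helly property of subtrees -/

/-- A set of nodes is path-convex if it contains every path of `T` between two of its members.
In a tree these are exactly the node sets of subtrees, together with the empty set. -/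
def PathConvex {ι : Type*} (T : SimpleGraph ι) (A : Set ι) : Prop :=
  ∀ ⦃x y : ι⦄, x ∈ A → y ∈ A → ∀ p : T.Walk x y, p.IsPath → ∀ z ∈ p.support, z ∈ A

section Helly

variable {ι : Type*} {T : SimpleGraph ι}

lemma PathConvex.inter {A B : Set ι} (hA : PathConvex T A) (hB : PathConvex T B) :
    PathConvex T (A ∩ B) :=
  fun _ _ hx hy p hp z hz => ⟨hA hx.1 hy.1 p hp z hz, hB hx.2 hy.2 p hp z hz⟩

lemma mem_of_mem_support_map {A : Set ι} {x y : A} (w : (T.induce A).Walk x y) {z : ι}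
    (hz : z ∈ (w.map (SimpleGraph.Embedding.induce A).toHom).support) : z ∈ A := by
  rw [SimpleGraph.Walk.support_map, List.mem_map] at hz
  obtain ⟨a, -, rfl⟩ := hz
  exact a.2

lemma pathConvex_of_connected (hT : T.IsTree) {A : Set ι} (hA : (T.induce A).Connected) :
    PathConvex T A := by
  classical
  intro x y hx hy p hp z hz
  obtain ⟨w, hw⟩ := (hA.preconnected ⟨x, hx⟩ ⟨y, hy⟩).exists_isPath
  have hpath : (w.map (SimpleGraph.Embedding.induce A).toHom).IsPath :=
    hw.map (SimpleGraph.Embedding.induce (G := T) A).injective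
  have heq : p = w.map (SimpleGraph.Embedding.induce A).toHom :=
    (hT.existsUnique_path x y).unique hp hpath
  subst heq
  exact mem_of_mem_support_map w hz

/-- The gate of `b` on a nonempty subtree `A`: a node of `A` lying on every path from `b`
into `A`. -/
lemma exists_gate (hT : T.IsTree) {A : Set ι} (hA : PathConvex T A) {a b : ι} (ha : a ∈ A)
    (w : T.Walk b a) :
    ∃ z ∈ A, ∀ c ∈ A, ∀ q : T.Walk b c, q.IsPath → z ∈ q.support := by
  classical
  induction w with
  | nil => exact ⟨_, ha, fun c _ q _ => q.start_mem_support⟩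
  | @cons b b' a hadj p ih =>
    by_cases hb : b ∈ A
    · exact ⟨b, hb, fun c _ q _ => q.start_mem_support⟩
    obtain ⟨z, hz, hgate⟩ := ih ha
    refine ⟨z, hz, fun c hc q hq => ?_⟩
    by_cases hzb : z = b'
    · subst hzb
      obtain ⟨r, hr⟩ := (hT.existsUnique_path z c).exists
      -- The neighbour `z` of `b` lies in `A`, so the path from `b` to `c` must start with `b, z`.
      have hbr : b ∉ r.support := fun h => hb (hA hz hc r hr b h)
      have hcons : (SimpleGraph.Walk.cons hadj r).IsPath := hr.cons hbr
      rw [(hT.existsUnique_path b c).unique hq hcons]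
      simp
    · have h1 := hgate c hc _ (SimpleGraph.Walk.cons hadj.symm q).bypass_isPath
      have h2 := SimpleGraph.Walk.support_bypass_subset_support _ h1
      rw [SimpleGraph.Walk.support_cons, List.mem_cons] at h2
      exact h2.resolve_left hzb

lemma helly_three (hT : T.IsTree) {A B C : Set ι} (hA : PathConvex T A) (hB : PathConvex T B)
    (hC : PathConvex T C) (hAB : (A ∩ B).Nonempty) (hBC : (B ∩ C).Nonempty)
    (hAC : (A ∩ C).Nonempty) : (A ∩ B ∩ C).Nonempty := by
  obtain ⟨a, haA, haB⟩ := hAB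
  obtain ⟨b, hbB, hbC⟩ := hBC
  obtain ⟨c, hcA, hcC⟩ := hAC
  obtain ⟨p, hp⟩ := (hT.existsUnique_path b a).exists
  obtain ⟨q, hq⟩ := (hT.existsUnique_path b c).exists
  obtain ⟨z, hz, hgate⟩ := exists_gate hT hA haA p
  exact ⟨z, ⟨hz, hB hbB haB p hp z (hgate a haA p hp)⟩, hC hbC hcC q hq z (hgate c hcA q hq)⟩

/-- Finite Helly property of subtrees, relative to a further subtree `K` so that the induction on
the family can replace `K` by its intersection with one more member. -/
lemma helly_finite (hT : T.IsTree) {V : Type*} (f : V → Set ι) (hf : ∀ v, PathConvex T (f v))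
    (hpair : ∀ u v, (f u ∩ f v).Nonempty) (s : Finset V) :
    ∀ K : Set ι, PathConvex T K → K.Nonempty → (∀ v ∈ s, (K ∩ f v).Nonempty) →
      ∃ x ∈ K, ∀ v ∈ s, x ∈ f v := by
  classical
  induction s using Finset.induction_on with
  | empty => exact fun K _ ⟨x, hx⟩ _ => ⟨x, hx, by simp⟩
  | insert v s _ ih =>
    intro K hK _ hKs
    obtain ⟨x, hx, hxs⟩ := ih (K ∩ f v) (hK.inter (hf v)) (hKs v (by simp)) fun w hw =>
      helly_three hT hK (hf v) (hf w) (hKs v (by simp)) (hpair v w) (hKs w (by simp [hw]))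
    refine ⟨x, hx.1, fun w hw => ?_⟩
    rcases Finset.mem_insert.1 hw with rfl | hw
    · exact hx.2
    · exact hxs w hw

/-- A path that starts in `A` and ends outside it leaves `A` along some edge `ij`, and its
remainder does not return through that edge. -/
lemma exists_exit_edge {A : Set ι} {x y : ι} (p : T.Walk x y) (hp : p.IsPath) (hx : x ∈ A)
    (hy : y ∉ A) :
    ∃ i j, i ∈ A ∧ j ∉ A ∧ T.Adj i j ∧ (T.deleteEdges {s(i, j)}).Reachable j y := by
  induction p with
  | nil => exact absurd hx hy
  | @cons x x' y hadj p ih =>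
    rw [SimpleGraph.Walk.cons_isPath_iff] at hp
    by_cases hx' : x' ∈ A
    · exact ih hp.1 hx' hy
    · refine ⟨x, x', hx, hx', hadj, ?_⟩
      rw [SimpleGraph.reachable_deleteEdges_iff_exists_walk]
      exact ⟨p, fun h => hp.2 (p.fst_mem_support_of_mem_edges h)⟩

end Helly

/-! ### Walks and adhesion sets in a tree decomposition -/

section Decomposition

variable {V ι : Type*} {G : SimpleGraph V} {T : SimpleGraph ι} {bags : ι → Set V}

/-- The bags along a walk `f a, …, f b` of `G` occupy a connected set of nodes. -/
lemma connected_iUnion_walk (h : IsTreeDecomp G T bags) (f : ℕ → V)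
    (hf : ∀ k, G.Adj (f k) (f (k + 1))) (a b : ℕ) (hab : a ≤ b) :
    (T.induce {i | ∃ k, a ≤ k ∧ k ≤ b ∧ f k ∈ bags i}).Connected := by
  induction b, hab using Nat.le_induction with
  | base =>
    have : {i | ∃ k, a ≤ k ∧ k ≤ a ∧ f k ∈ bags i} = {i | f a ∈ bags i} := by
      ext i
      constructor
      · rintro ⟨k, h1, h2, h3⟩
        obtain rfl : k = a := le_antisymm h2 h1
        exact h3
      · exact fun h => ⟨a, le_rfl, le_rfl, h⟩
    rw [this]
    exact h.2.2.2 (f a)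
  | succ b hab ih =>
    have : {i | ∃ k, a ≤ k ∧ k ≤ b + 1 ∧ f k ∈ bags i} =
        {i | ∃ k, a ≤ k ∧ k ≤ b ∧ f k ∈ bags i} ∪ {i | f (b + 1) ∈ bags i} := by
      ext i
      constructor
      · rintro ⟨k, h1, h2, h3⟩
        rcases Nat.lt_or_ge b k with hk | hk
        · obtain rfl : k = b + 1 := by omega
          exact Or.inr h3
        · exact Or.inl ⟨k, h1, hk, h3⟩
      · rintro (⟨k, h1, h2, h3⟩ | h3)
        · exact ⟨k, h1, by omega, h3⟩
        · exact ⟨b + 1, by omega, le_rfl, h3⟩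
    rw [this]
    obtain ⟨i, hi, hi'⟩ := h.2.2.1 _ _ (hf b)
    exact SimpleGraph.induce_union_connected ih.preconnected (h.2.2.2 _).preconnected
      ⟨i, ⟨b, hab, le_rfl, hi⟩, hi'⟩

/-- If `v` avoids the adhesion set of the edge `ij`, then its subtree survives the deletion of
that edge. -/
lemma reachable_of_not_mem_adhesion (h : IsTreeDecomp G T bags) {i j : ι} {v : V}
    (hv : v ∉ bags i ∩ bags j) {x y : ι} (hx : v ∈ bags x) (hy : v ∈ bags y) :
    (T.deleteEdges {s(i, j)}).Reachable x y := by
  obtain ⟨w⟩ := (h.2.2.2 v).preconnected ⟨x, hx⟩ ⟨y, hy⟩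
  rw [SimpleGraph.reachable_deleteEdges_iff_exists_walk]
  refine ⟨w.map (SimpleGraph.Embedding.induce {i | v ∈ bags i}).toHom, fun hmem => hv ?_⟩
  have hi := SimpleGraph.Walk.fst_mem_support_of_mem_edges _ hmem
  have hj := SimpleGraph.Walk.snd_mem_support_of_mem_edges _ hmem
  exact ⟨mem_of_mem_support_map w hi, mem_of_mem_support_map w hj⟩

/-- A walk `f a, …, f b` of `G` avoiding the adhesion set of the edge `ij` stays on one side of
that edge. -/
lemma reachable_of_walk_avoids (h : IsTreeDecomp G T bags) (f : ℕ → V)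
    (hf : ∀ k, G.Adj (f k) (f (k + 1))) {i j : ι} (a b : ℕ) (hab : a ≤ b)
    (hS : ∀ k, a ≤ k → k ≤ b → f k ∉ bags i ∩ bags j) {x : ι} (hx : f a ∈ bags x) :
    ∀ y, f b ∈ bags y → (T.deleteEdges {s(i, j)}).Reachable x y := by
  induction b, hab using Nat.le_induction with
  | base => exact fun y hy => reachable_of_not_mem_adhesion h (hS a le_rfl le_rfl) hx hy
  | succ b hab ih =>
    intro y hy
    obtain ⟨m, hm, hm'⟩ := h.2.2.1 _ _ (hf b)
    exact (ih (fun k h1 h2 => hS k h1 (by omega)) m hm).trans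
      (reachable_of_not_mem_adhesion h (hS (b + 1) (by omega) le_rfl) hm' hy)

end Decomposition

/-! ### Lower bounds for the cycle -/

section Cycle

/-- The cycle on `ZMod n`. -/
abbrev cyc (n : ℕ) : SimpleGraph (ZMod n) := SimpleGraph.fromRel (fun i j => j = i + 1)

variable {n : ℕ}

lemma natCast_zmod_ne {k l : ℕ} (hkl : k < l) (hl : l < k + n) : (k : ZMod n) ≠ (l : ZMod n) := by
  rw [Ne, ZMod.natCast_eq_natCast_iff]
  intro h
  have h1 := (Nat.modEq_iff_dvd' hkl.le).1 h
  have := Nat.le_of_dvd (by omega) h1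
  omega

lemma cyc_adj_succ (hn : 3 ≤ n) (u : ZMod n) (k : ℕ) :
    (cyc n).Adj (u + (k : ZMod n)) (u + ((k + 1 : ℕ) : ZMod n)) := by
  rw [SimpleGraph.fromRel_adj]
  refine ⟨fun h => ?_, Or.inl (by push_cast; ring)⟩
  exact natCast_zmod_ne (Nat.lt_succ_self k) (by omega) (add_left_cancel h)

lemma cyc_not_adj (u : ZMod n) {k l : ℕ} (hkl : k + 2 ≤ l) (hl : l + 1 < k + n) :
    ¬ (cyc n).Adj (u + (k : ZMod n)) (u + (l : ZMod n)) := by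
  rw [SimpleGraph.fromRel_adj]
  rintro ⟨-, h | h⟩
  · have h' : ((k + 1 : ℕ) : ZMod n) = (l : ZMod n) := by
      push_cast
      exact (add_left_cancel (h.trans (add_assoc _ _ _))).symm
    exact natCast_zmod_ne (by omega) (by omega) h'
  · have h' : (k : ZMod n) = ((l + 1 : ℕ) : ZMod n) := by
      push_cast
      exact add_left_cancel (h.trans (add_assoc _ _ _))
    exact natCast_zmod_ne (by omega) (by omega) h'

/-- In a simplicial decomposition of the cycle any two vertices share a bag. -/
lemma exists_common_bag [NeZero n] (hn : 3 ≤ n) {ι : Type*} {T : SimpleGraph ι}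
    {bags : ι → Set (ZMod n)} (h : IsSimplicialDecomp (cyc n) T bags) (u v : ZMod n) :
    ({i | u ∈ bags i} ∩ {i | v ∈ bags i}).Nonempty := by
  obtain ⟨hdec, hcl⟩ := h
  by_contra hne
  have hdisj : ∀ i, u ∈ bags i → v ∉ bags i := fun i hu hv => hne ⟨i, hu, hv⟩
  obtain ⟨x, hx⟩ := hdec.2.1 u
  obtain ⟨y, hy⟩ := hdec.2.1 v
  have hyu : y ∉ {i | u ∈ bags i} := fun hu => hdisj y hu hy
  obtain ⟨p, hp⟩ := (hdec.1.existsUnique_path x y).exists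
  obtain ⟨i, j, hi, hj, hadj, hreach⟩ := exists_exit_edge (A := {i | u ∈ bags i}) p hp hx hyu
  have hbridge : ¬ (T.deleteEdges {s(i, j)}).Reachable i j :=
    SimpleGraph.isAcyclic_iff_forall_adj_isBridge.1 hdec.1.isAcyclic hadj
  have huS : u ∉ bags i ∩ bags j := fun hu => hj hu.2
  have hvS : v ∉ bags i ∩ bags j := fun hv => hdisj i hi hv.1
  -- `f` runs once around the cycle from `u`, passing `v` at time `d`.
  set f : ℕ → ZMod n := fun k => u + (k : ZMod n) with hfdef
  have hf : ∀ k, (cyc n).Adj (f k) (f (k + 1)) := cyc_adj_succ hn u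
  set d := (v - u).val with hd
  have hdn : d < n := ZMod.val_lt _
  have hf0 : f 0 = u := by simp [hfdef]
  have hfn : f n = u := by simp [hfdef]
  have hfd : f d = v := by simp [hfdef, hd]
  obtain ⟨k, hk, hkd, hkS⟩ : ∃ k, 0 ≤ k ∧ k ≤ d ∧ f k ∈ bags i ∩ bags j := by
    by_contra! hcon
    exact hbridge ((reachable_of_walk_avoids hdec f hf 0 d (Nat.zero_le _)
      (fun k h1 h2 => hcon k h1 h2) (hf0.symm ▸ hi) y (hfd.symm ▸ hy)).trans hreach.symm)
  obtain ⟨l, hl, hln, hlS⟩ : ∃ l, d ≤ l ∧ l ≤ n ∧ f l ∈ bags i ∩ bags j := by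
    by_contra! hcon
    exact hbridge ((hreach.trans (reachable_of_walk_avoids hdec f hf d n hdn.le
      (fun k h1 h2 => hcon k h1 h2) (hfd.symm ▸ hy) i (hfn.symm ▸ hi))).symm)
  have hk0 : k ≠ 0 := fun h0 => huS (hf0 ▸ h0 ▸ hkS)
  have hkd' : k ≠ d := fun h0 => hvS (hfd ▸ h0 ▸ hkS)
  have hld' : l ≠ d := fun h0 => hvS (hfd ▸ h0 ▸ hlS)
  have hln' : l ≠ n := fun h0 => huS (hfn ▸ h0 ▸ hlS)
  have hkl : f k ≠ f l := fun h0 =>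
    natCast_zmod_ne (n := n) (k := k) (l := l) (by omega) (by omega) (add_left_cancel h0)
  exact cyc_not_adj u (by omega) (by omega) (hcl i j hadj hkS hlS hkl)

lemma exists_bag_eq_univ [NeZero n] (hn : 3 ≤ n) {ι : Type*} {T : SimpleGraph ι}
    {bags : ι → Set (ZMod n)} (h : IsSimplicialDecomp (cyc n) T bags) :
    ∃ i, bags i = Set.univ := by
  have hT := h.1.1
  obtain ⟨i, -, hi⟩ := helly_finite hT (fun v => {i | v ∈ bags i})
    (fun v => pathConvex_of_connected hT (h.1.2.2.2 v)) (exists_common_bag hn h) Finset.univ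
    Set.univ (fun _ _ _ _ _ _ _ _ => trivial) (h.1.2.1 0 |>.imp fun _ _ => trivial)
    (fun v _ => by simpa [Set.Nonempty] using h.1.2.1 v)
  exact ⟨i, Set.eq_univ_of_forall fun v => hi v (Finset.mem_univ v)⟩

lemma exists_three_le_ncard [NeZero n] (hn : 3 ≤ n) {ι : Type*} {T : SimpleGraph ι}
    {bags : ι → Set (ZMod n)} (h : IsTreeDecomp (cyc n) T bags) :
    ∃ i, 3 ≤ (bags i).ncard := by
  have hT := h.1
  set f : ℕ → ZMod n := fun k => (0 : ZMod n) + (k : ZMod n) with hfdef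
  have hf : ∀ k, (cyc n).Adj (f k) (f (k + 1)) := cyc_adj_succ hn 0
  have hfn : f n = f 0 := by simp [hfdef]
  have hne : ∀ k l, k < l → l < n → f k ≠ f l := fun k l h1 h2 h0 =>
    natCast_zmod_ne (n := n) (k := k) (l := l) h1 (by omega) (add_left_cancel h0)
  have hn1 : n - 1 + 1 = n := by omega
  obtain ⟨a, ha0, ha1⟩ := h.2.2.1 _ _ (hf 0)
  obtain ⟨b, hb1, hb2⟩ := h.2.2.1 _ _ (hf 1)
  obtain ⟨c, hc1, hc0⟩ := h.2.2.1 _ _ (hf (n - 1))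
  rw [hn1, hfn] at hc0
  obtain ⟨i, ⟨hi0, hi1⟩, k, hk2, hkn, hik⟩ := helly_three hT
    (pathConvex_of_connected hT (h.2.2.2 (f 0))) (pathConvex_of_connected hT (h.2.2.2 (f 1)))
    (pathConvex_of_connected hT (connected_iUnion_walk h f hf 2 (n - 1) (by omega)))
    ⟨a, ha0, ha1⟩ ⟨b, hb1, 2, le_rfl, by omega, hb2⟩ ⟨c, hc0, n - 1, by omega, le_rfl, hc1⟩
  refine ⟨i, ?_⟩
  have hsub : ({f 0, f 1, f k} : Set (ZMod n)) ⊆ bags i := by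
    rintro x (rfl | rfl | rfl) <;> assumption
  have hcard : ({f 0, f 1, f k} : Set (ZMod n)).ncard = 3 :=
    Set.ncard_eq_three.2 ⟨_, _, _, hne 0 1 (by omega) (by omega), hne 0 k (by omega) (by omega),
      hne 1 k (by omega) (by omega), rfl⟩
  exact hcard ▸ Set.ncard_le_ncard hsub (Set.toFinite _)

/-! ### The fan decomposition -/

lemma pathGraph_isTree (m : ℕ) : (SimpleGraph.pathGraph (m + 1)).IsTree := by
  refine ⟨SimpleGraph.pathGraph_connected m, ?_⟩
  -- After deleting the edge between `v` and `v + 1` no walk leaves `{x | x ≤ v}`.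
  have key : ∀ v w : Fin (m + 1), v.val + 1 = w.val →
      (SimpleGraph.pathGraph (m + 1)).IsBridge s(v, w) := by
    intro v w hvw
    rw [SimpleGraph.isBridge_iff]
    rintro ⟨p⟩
    have stay : ∀ (x y : Fin (m + 1)),
        ((SimpleGraph.pathGraph (m + 1)).deleteEdges {s(v, w)}).Walk x y → x ≤ v → y ≤ v := by
      intro x y q
      induction q with
      | nil => exact id
      | @cons x x' y hadj q ih =>
        intro hx
        apply ih
        rw [SimpleGraph.deleteEdges_adj, SimpleGraph.pathGraph_adj] at hadj
        obtain ⟨h1, h2⟩ := hadj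
        by_contra hlt
        have hx1 : x = v := by ext; omega
        have hx2 : x' = w := by ext; omega
        exact h2 (by simp [hx1, hx2])
    have := stay v w p le_rfl
    omega
  rw [SimpleGraph.isAcyclic_iff_forall_adj_isBridge]
  intro v w hadj
  rcases SimpleGraph.pathGraph_adj.1 hadj with h | h
  · exact key v w h
  · rw [Sym2.eq_swap]
    exact key w v h

/-- The fan decomposition of the cycle on `m + 3` vertices: nodes `0, …, m` of a path, with bag
`{0, i + 1, i + 2}` at node `i`. -/
lemma fan_isTreeDecomp (m : ℕ) :
    IsTreeDecomp (cyc (m + 3)) (SimpleGraph.pathGraph (m + 1))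
      (fun i => {0, ((i.val + 1 : ℕ) : ZMod (m + 3)), ((i.val + 2 : ℕ) : ZMod (m + 3))}) := by
  have hcast : ∀ v : ZMod (m + 3), ∃ k, k < m + 3 ∧ (k : ZMod (m + 3)) = v :=
    fun v => ⟨v.val, ZMod.val_lt v, by simp⟩
  have hinj : ∀ k l : ℕ, k < m + 3 → l < m + 3 → (k : ZMod (m + 3)) = l → k = l := by
    intro k l hk hl he
    rcases lt_trichotomy k l with h | h | h
    · exact absurd he (natCast_zmod_ne h (by omega))
    · exact h
    · exact absurd he.symm (natCast_zmod_ne h (by omega))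
  have hedge : ∀ u : ZMod (m + 3), ∃ i : Fin (m + 1),
      u ∈ ({0, ((i.val + 1 : ℕ) : ZMod (m + 3)), ((i.val + 2 : ℕ) : ZMod (m + 3))} : Set _) ∧
      u + 1 ∈
        ({0, ((i.val + 1 : ℕ) : ZMod (m + 3)), ((i.val + 2 : ℕ) : ZMod (m + 3))} : Set _) := by
    intro u
    obtain ⟨k, hk, rfl⟩ := hcast u
    rcases Nat.eq_zero_or_pos k with rfl | hk0
    · exact ⟨0, by simp, by simp⟩
    rcases Nat.lt_or_ge k (m + 2) with hk2 | hk2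
    · refine ⟨⟨k - 1, by omega⟩, Or.inr (Or.inl ?_), Or.inr (Or.inr ?_)⟩
      · simp only [show k - 1 + 1 = k by omega]
      · simp only [show k - 1 + 2 = k + 1 by omega]
        push_cast
        rfl
    · obtain rfl : k = m + 2 := by omega
      -- The closing edge from `m + 2` back to `0` lies in the last bag.
      refine ⟨⟨m, by omega⟩, Or.inr (Or.inr rfl), Or.inl ?_⟩
      have : ((m + 3 : ℕ) : ZMod (m + 3)) = 0 := ZMod.natCast_self _
      push_cast at this ⊢
      rw [← this]
      ring
  refine ⟨pathGraph_isTree m, fun v => (hedge v).imp fun _ h => h.1, ?_, ?_⟩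
  · intro u v huv
    rcases ((SimpleGraph.fromRel_adj _ _ _).1 huv).2 with rfl | rfl
    · exact hedge u
    · exact (hedge v).imp fun _ h => h.symm
  · intro v
    have hne : Nonempty {i : Fin (m + 1) | v ∈
        ({0, ((i.val + 1 : ℕ) : ZMod (m + 3)), ((i.val + 2 : ℕ) : ZMod (m + 3))} : Set _)} :=
      let ⟨i, hi⟩ := hedge v
      ⟨⟨i, hi.1⟩⟩
    by_cases hv : v = 0
    · have huniv : {i : Fin (m + 1) | v ∈
          ({0, ((i.val + 1 : ℕ) : ZMod (m + 3)), ((i.val + 2 : ℕ) : ZMod (m + 3))} : Set _)}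
          = Set.univ := by
        ext i
        simp [hv]
      rw [huniv]
      exact (SimpleGraph.induceUnivIso _).connected_iff.2 (SimpleGraph.pathGraph_connected m)
    · obtain ⟨k, hk, rfl⟩ := hcast v
      -- A nonzero vertex `k` occurs only at the nodes `k - 1` and `k - 2`.
      have hpos : ∀ i : Fin (m + 1), (k : ZMod (m + 3)) ∈
          ({0, ((i.val + 1 : ℕ) : ZMod (m + 3)), ((i.val + 2 : ℕ) : ZMod (m + 3))} : Set _) →
          k = i.val + 1 ∨ k = i.val + 2 := by
        rintro i (h | h | h)
        · exact absurd h hv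
        · exact Or.inl (hinj _ _ hk (by omega) h)
        · exact Or.inr (hinj _ _ hk (by omega) h)
      refine { preconnected := ?_, nonempty := hne }
      rintro ⟨i, hi⟩ ⟨j, hj⟩
      by_cases hij : i = j
      · subst hij
        exact SimpleGraph.Reachable.refl _
      · apply SimpleGraph.Adj.reachable
        rw [SimpleGraph.comap_adj]
        refine SimpleGraph.pathGraph_adj.2 ?_
        have h1 := hpos i hi
        have h2 := hpos j hj
        have h3 : i.val ≠ j.val := fun h => hij (Fin.ext h)
        change i.val + 1 = j.val ∨ j.val + 1 = i.val
        omega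

end Cycle

/-- The cycle `C_n` (n ≥ 3) has treewidth exactly 2 (there is a tree decomposition with all
bags of size ≤ 3, and none with all bags of size ≤ 2) but simplicial width exactly `n - 1`
(there is a simplicial decomposition with all bags of size ≤ n, and none with all bags of
size ≤ n - 1). -/
theorem cycle_treewidth_and_simplicial_width (n : ℕ) [NeZero n] (hn : 3 ≤ n) :
    let Cn : SimpleGraph (ZMod n) := SimpleGraph.fromRel (fun i j => j = i + 1)
    (∃ (ι : Type) (T : SimpleGraph ι) (bags : ι → Set (ZMod n)),
        IsTreeDecomp Cn T bags ∧ ∀ i, (bags i).ncard ≤ 3) ∧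
    (¬ ∃ (ι : Type) (T : SimpleGraph ι) (bags : ι → Set (ZMod n)),
        IsTreeDecomp Cn T bags ∧ ∀ i, (bags i).ncard ≤ 2) ∧
    (∃ (ι : Type) (T : SimpleGraph ι) (bags : ι → Set (ZMod n)),
        IsSimplicialDecomp Cn T bags ∧ ∀ i, (bags i).ncard ≤ n) ∧
    (¬ ∃ (ι : Type) (T : SimpleGraph ι) (bags : ι → Set (ZMod n)),
        IsSimplicialDecomp Cn T bags ∧ ∀ i, (bags i).ncard ≤ n - 1) := by
  intro Cn
  refine ⟨?_, ?_, ?_, ?_⟩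
  · obtain ⟨m, rfl⟩ : ∃ m, n = m + 3 := ⟨n - 3, by omega⟩
    refine ⟨_, _, _, fan_isTreeDecomp m, fun i => ?_⟩
    exact (Set.ncard_insert_le _ _).trans (Nat.succ_le_succ
      ((Set.ncard_insert_le _ _).trans (Nat.succ_le_succ (Set.ncard_singleton _).le)))
  · rintro ⟨ι, T, bags, h, hle⟩
    obtain ⟨i, hi⟩ := exists_three_le_ncard hn h
    have := hle i
    omega
  · refine ⟨Unit, ⊥, fun _ => Set.univ, ⟨⟨SimpleGraph.IsTree.of_subsingleton, fun _ => ⟨(), trivial⟩,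
      fun _ _ _ => ⟨(), trivial, trivial⟩, fun v => ?_⟩, fun i j hij => hij.elim⟩, fun _ => ?_⟩
    · have : Nonempty {i : Unit | v ∈ (Set.univ : Set (ZMod n))} := ⟨⟨(), trivial⟩⟩
      exact SimpleGraph.IsTree.of_subsingleton.connected
    · rw [Set.ncard_univ, Nat.card_zmod]
  · rintro ⟨ι, T, bags, h, hle⟩
    obtain ⟨i, hi⟩ := exists_bag_eq_univ hn h
    have := hle i
    rw [hi, Set.ncard_univ, Nat.card_zmod] at this
    omega
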